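/- For every integer k ≥ 1 there exist a constant C_k > 0 and a threshold x₀(k) such that for all integers x ≥ x₀(k) and H with x^{1 − 1/(50k)} ≤ H ≤ x, the number N_k(x, H) of nontrivial solutions satisfies N_k(x, H) ≤ C_k · H^k · (H/x) · (1 + log x)^{2k²+2}, where log denotes the natural logarithm. -/

import Mathlib

/-- `N_k(x, H)`: the number of nontrivial solutions
`(n₁,…,n_{2k}) ∈ ((x, x+H] ∩ ℤ)^{2k}` of `n₁⋯n_k = n_{k+1}⋯n_{2k}`, where a solution
is trivial iff the multiset `{n₁,…,n_k}` equals the multiset `{n_{k+1},…,n_{2k}}`.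
Here `p.1 i = n_i` and `p.2 i = n_{k+i}`. -/
noncomputable def NkCount (k x H : ℕ) : ℕ :=
  Nat.card {p : (Fin k → ℕ) × (Fin k → ℕ) //
    (∀ i, p.1 i ∈ Finset.Ioc x (x + H)) ∧ (∀ i, p.2 i ∈ Finset.Ioc x (x + H)) ∧
    (∏ i, p.1 i) = (∏ i, p.2 i) ∧
    Multiset.map p.1 Finset.univ.val ≠ Multiset.map p.2 Finset.univ.val}

/-- A number dividing a product indexed by a finite type splits into divisors of the factors. -/
lemma exists_prod_eq_of_dvd_prod {n : ℕ} (b : Fin n → ℕ) (a : ℕ) (h : a ∣ ∏ j, b j) :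
    ∃ d : Fin n → ℕ, (∏ j, d j) = a ∧ ∀ j, d j ∣ b j := by
  induction n generalizing a with
  | zero => exact ⟨fun _ => 1, by simpa using (Nat.dvd_one.mp (by simpa using h)).symm, by simp⟩
  | succ n ih =>
    rw [Fin.prod_univ_succ] at h
    obtain ⟨a₁, a₂, h₁, h₂, rfl⟩ := exists_dvd_and_dvd_of_dvd_mul h
    obtain ⟨d, rfl, hd⟩ := ih (fun j => b j.succ) a₂ h₂
    refine ⟨Fin.cons a₁ d, by simp [Fin.prod_univ_succ], fun j => ?_⟩
    refine Fin.cases ?_ (fun j => ?_) j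
    · simpa using h₁
    · simpa using hd j

/-- Two equal products of positive integers have a common refinement, given by a matrix with
prescribed row and column products. -/
lemma exists_matrix_of_prod_eq {m n : ℕ} (a : Fin m → ℕ) (b : Fin n → ℕ)
    (ha : ∀ i, 0 < a i) (h : ∏ i, a i = ∏ j, b j) :
    ∃ g : Fin m → Fin n → ℕ, (∀ i, ∏ j, g i j = a i) ∧ ∀ j, ∏ i, g i j = b j := by
  induction m generalizing b with
  | zero =>
    refine ⟨fun i => i.elim0, fun i => i.elim0, fun j => ?_⟩
    have h1 : ∏ j, b j = 1 := by simpa using h.symm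
    have := Nat.dvd_one.mp (h1 ▸ Finset.dvd_prod_of_mem b (Finset.mem_univ j))
    simpa using this.symm
  | succ m ih =>
    rw [Fin.prod_univ_succ] at h
    obtain ⟨d, hd, hdb⟩ := exists_prod_eq_of_dvd_prod b (a 0) (h ▸ dvd_mul_right _ _)
    choose c hc using hdb
    obtain ⟨g, hg, hg'⟩ := ih (fun i => a i.succ) c (fun i => ha _) (by
      refine Nat.eq_of_mul_eq_mul_left (ha 0) ?_
      rw [h, ← hd, ← Finset.prod_mul_distrib]
      exact Finset.prod_congr rfl fun j _ => hc j)
    refine ⟨Fin.cons d g, fun i => ?_, fun j => ?_⟩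
    · refine Fin.cases ?_ (fun i => ?_) i
      · simpa using hd
      · simpa using hg i
    · simp [Fin.prod_univ_succ, hg', ← hc]

/-- The sum of the reciprocals of the positive integers up to `X`. -/
noncomputable def recipSum (X : ℕ) : ℝ := ∑ n ∈ Finset.Icc 1 X, (n : ℝ)⁻¹

lemma recipSum_le (X : ℕ) : recipSum X ≤ 1 + Real.log X := by
  have := harmonic_le_one_add_log X
  rw [harmonic_eq_sum_Icc] at this
  simpa [recipSum] using this

lemma one_le_recipSum {X : ℕ} (hX : 1 ≤ X) : 1 ≤ recipSum X := by
  have := Finset.single_le_sum (f := fun n : ℕ => (n : ℝ)⁻¹) (s := Finset.Icc 1 X)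
    (fun i _ => by positivity) (Finset.left_mem_Icc.mpr hX)
  simpa [recipSum] using this

/-- Tuples of length `k` with entries in `[1, X]`. -/
def tupleBox (k X : ℕ) : Finset (Fin k → ℕ) := Fintype.piFinset fun _ => Finset.Icc 1 X

/-- Square matrices of size `k` with entries in `[1, X]`. -/
def matrixBox (k X : ℕ) : Finset (Fin k → Fin k → ℕ) := Fintype.piFinset fun _ => tupleBox k X

lemma mem_tupleBox {k X : ℕ} {a : Fin k → ℕ} :
    a ∈ tupleBox k X ↔ ∀ i, 1 ≤ a i ∧ a i ≤ X := by
  simp [tupleBox]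

lemma mem_matrixBox {k X : ℕ} {g : Fin k → Fin k → ℕ} :
    g ∈ matrixBox k X ↔ ∀ i j, 1 ≤ g i j ∧ g i j ≤ X := by
  simp [matrixBox, mem_tupleBox]

/-- The reciprocal of the product of all entries of a matrix. -/
noncomputable def recipWeight {k : ℕ} (g : Fin k → Fin k → ℕ) : ℝ := ∏ i, ∏ j, (g i j : ℝ)⁻¹

lemma recipWeight_nonneg {k : ℕ} (g : Fin k → Fin k → ℕ) : 0 ≤ recipWeight g :=
  Finset.prod_nonneg fun _ _ => Finset.prod_nonneg fun _ _ => by positivity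

lemma sum_recipWeight (k X : ℕ) :
    ∑ g ∈ matrixBox k X, recipWeight g = recipSum X ^ (k ^ 2) := by
  have h : ∑ a ∈ tupleBox k X, ∏ j, (a j : ℝ)⁻¹ = recipSum X ^ k := by
    simpa [recipSum, tupleBox] using
      (Finset.prod_univ_sum (fun _ : Fin k => Finset.Icc 1 X) (fun _ n => (n : ℝ)⁻¹)).symm
  have h' := (Finset.prod_univ_sum (fun _ : Fin k => tupleBox k X)
    (fun _ a => ∏ j, (a j : ℝ)⁻¹)).symm
  rw [matrixBox]
  simp only [recipWeight]
  rw [h']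
  simp only [h, Finset.prod_const, Finset.card_univ, Fintype.card_fin]
  rw [← pow_mul, sq]

lemma card_le_of_mul_mem_Ioc {x H P : ℕ} (hH : H ≤ x) (V : Finset ℕ)
    (hV : ∀ u ∈ V, u * P ∈ Finset.Ioc x (x + H) ∧ x ≤ u * H) :
    (V.card : ℝ) ≤ 3 * H * (P : ℝ)⁻¹ := by
  rcases V.eq_empty_or_nonempty with rfl | ⟨u, hu⟩
  · simp; positivity
  obtain ⟨hu1, hu2⟩ := hV u hu
  rw [Finset.mem_Ioc] at hu1
  have hP : 0 < P := by
    rcases Nat.eq_zero_or_pos P with rfl | h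
    · simp at hu1
    · exact h
  have hu0 : 0 < u := by
    rcases Nat.eq_zero_or_pos u with rfl | h
    · simp at hu1
    · exact h
  have hP2 : P ≤ 2 * H := by
    refine Nat.le_of_mul_le_mul_left (?_ : u * P ≤ u * (2 * H)) hu0
    linarith [hu1.2]
  have hsub : V ⊆ Finset.Ioc (x / P) ((x + H) / P) := by
    intro v hv
    have := Finset.mem_Ioc.mp (hV v hv).1
    rw [Finset.mem_Ioc, Nat.div_lt_iff_lt_mul hP, Nat.le_div_iff_mul_le hP]
    exact this
  have hc := Finset.card_le_card hsub
  rw [Nat.card_Ioc] at hc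
  have hP' : (0 : ℝ) < P := by exact_mod_cast hP
  have h1 : (((x + H) / P : ℕ) : ℝ) ≤ (x + H) / P := by exact_mod_cast Nat.cast_div_le (α := ℝ)
  have h2 : (x : ℝ) / P < ((x / P : ℕ) : ℝ) + 1 := by
    rw [div_lt_iff₀ hP']
    exact_mod_cast Nat.lt_mul_of_div_lt (Nat.lt_succ_self (x / P)) hP
  have hc' : (V.card : ℝ) ≤ (((x + H) / P : ℕ) : ℝ) - ((x / P : ℕ) : ℝ) := by
    rw [← Nat.cast_sub (Nat.div_le_div_right (Nat.le_add_right _ _))]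
    exact_mod_cast hc
  have h3 : 1 ≤ 2 * H * (P : ℝ)⁻¹ := by
    rw [← div_eq_mul_inv, le_div_iff₀ hP']
    exact_mod_cast (by simpa using hP2)
  rw [add_div] at h1
  have : (V.card : ℝ) ≤ H / P + 1 := by linarith
  rw [div_eq_mul_inv] at this
  linarith

lemma prod_eq_mul_prod_ite {k : ℕ} {M : Type*} [CommMonoid M] (a : Fin k → M) (s : Fin k) :
    ∏ j, a j = a s * ∏ j, (if j = s then 1 else a j) := by
  have : ∏ j, (if j = s then a j else 1) = a s := by simp
  rw [← this, ← Finset.prod_mul_distrib]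
  exact Finset.prod_congr rfl fun j _ => by split_ifs <;> simp

/-- The matrix obtained by replacing the entry in column `σ i` of each row `i` by `1`. -/
def clearEntries {k : ℕ} (σ : Fin k → Fin k) (g : Fin k → Fin k → ℕ) : Fin k → Fin k → ℕ :=
  fun i j => if j = σ i then 1 else g i j

lemma row_prod_eq {k : ℕ} (σ : Fin k → Fin k) (g : Fin k → Fin k → ℕ) (i : Fin k) :
    ∏ j, g i j = g i (σ i) * ∏ j, clearEntries σ g i j :=
  prod_eq_mul_prod_ite _ _

lemma card_le_sum_image_clearEntries {k x H : ℕ} (hH : H ≤ x) (σ : Fin k → Fin k)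
    (M : Finset (Fin k → Fin k → ℕ))
    (hrow : ∀ g ∈ M, ∀ i, ∏ j, g i j ∈ Finset.Ioc x (x + H))
    (hbig : ∀ g ∈ M, ∀ i, x ≤ g i (σ i) * H) :
    (M.card : ℝ) ≤ (3 * H) ^ k * ∑ b ∈ M.image (clearEntries σ), recipWeight b := by
  rw [Finset.card_eq_sum_card_image (clearEntries σ) M, Finset.mul_sum]
  push_cast
  refine Finset.sum_le_sum fun b _ => ?_
  set F := {g ∈ M | clearEntries σ g = b} with hF
  have hinj : Set.InjOn (fun (g : Fin k → Fin k → ℕ) i => g i (σ i)) (F : Set _) := by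
    intro g hg g' hg' h
    have e1 := (Finset.mem_filter.mp hg).2
    have e2 := (Finset.mem_filter.mp hg').2
    funext i j
    by_cases hj : j = σ i
    · subst hj; exact congrFun h i
    · have := congrFun (congrFun (e1.trans e2.symm) i) j
      simpa [clearEntries, hj] using this
  have hmaps : F.image (fun (g : Fin k → Fin k → ℕ) i => g i (σ i)) ⊆
      Fintype.piFinset fun i => F.image fun g => g i (σ i) := by
    intro v hv
    obtain ⟨g, hg, rfl⟩ := Finset.mem_image.mp hv
    exact Fintype.mem_piFinset.mpr fun i => Finset.mem_image_of_mem (fun g => g i (σ i)) hg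
  have hcard := Finset.card_le_card hmaps
  rw [Finset.card_image_of_injOn hinj, Fintype.card_piFinset] at hcard
  calc (F.card : ℝ) ≤ ∏ i, ((F.image fun g => g i (σ i)).card : ℝ) := by exact_mod_cast hcard
    _ ≤ ∏ i, (3 * H * ((∏ j, b i j : ℕ) : ℝ)⁻¹) := by
      refine Finset.prod_le_prod (fun _ _ => by positivity) fun i _ => ?_
      refine card_le_of_mul_mem_Ioc hH _ fun u hu => ?_
      obtain ⟨g, hg, rfl⟩ := Finset.mem_image.mp hu
      obtain ⟨hgM, rfl⟩ := Finset.mem_filter.mp hg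
      exact ⟨row_prod_eq σ g i ▸ hrow g hgM i, hbig g hgM i⟩
    _ = (3 * H) ^ k * recipWeight b := by
      simp [Finset.prod_mul_distrib, recipWeight, Finset.prod_inv_distrib]

/-- The matrix with the entry at `(i₀, j₀)` replaced by `1`. -/
def clearEntry {k : ℕ} (i₀ j₀ : Fin k) (b : Fin k → Fin k → ℕ) : Fin k → Fin k → ℕ :=
  fun i j => if i = i₀ then (if j = j₀ then 1 else b i j) else b i j

lemma col_prod_eq {k : ℕ} (i₀ j₀ : Fin k) (b : Fin k → Fin k → ℕ) :
    ∏ i, b i j₀ = b i₀ j₀ * ∏ i, clearEntry i₀ j₀ b i j₀ := by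
  rw [prod_eq_mul_prod_ite (fun i => b i j₀) i₀]
  simp [clearEntry]

lemma recipWeight_clearEntry {k : ℕ} (i₀ j₀ : Fin k) (b : Fin k → Fin k → ℕ) :
    recipWeight b = (b i₀ j₀ : ℝ)⁻¹ * recipWeight (clearEntry i₀ j₀ b) := by
  have h : ∀ i, ∏ j, (clearEntry i₀ j₀ b i j : ℝ)⁻¹ =
      if i = i₀ then ∏ j, (if j = j₀ then 1 else (b i j : ℝ)⁻¹) else ∏ j, (b i j : ℝ)⁻¹ := by
    intro i
    split_ifs with hi
    · refine Finset.prod_congr rfl fun j _ => ?_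
      simp only [clearEntry, hi]
      split_ifs <;> simp
    · simp [clearEntry, hi]
  rw [recipWeight, recipWeight, prod_eq_mul_prod_ite _ i₀,
    prod_eq_mul_prod_ite (fun j => (b i₀ j : ℝ)⁻¹) j₀,
    prod_eq_mul_prod_ite (fun i => ∏ j, (clearEntry i₀ j₀ b i j : ℝ)⁻¹) i₀]
  simp only [h, if_true, mul_assoc]
  congr 3
  funext i
  split_ifs <;> rfl

lemma sum_recipWeight_le_of_col {k x H X : ℕ} (hx : 0 < x) (hH : H ≤ x) (i₀ j₀ : Fin k)
    (A : Finset (Fin k → Fin k → ℕ)) (hA : A ⊆ matrixBox k X)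
    (hcol : ∀ b ∈ A, ∏ i, b i j₀ ∈ Finset.Ioc x (x + H))
    (hbig : ∀ b ∈ A, x ≤ b i₀ j₀ * H) :
    ∑ b ∈ A, recipWeight b ≤ 3 * ((H : ℝ) / x) * recipSum X ^ (k ^ 2) := by
  have hmaps : ∀ b ∈ A, clearEntry i₀ j₀ b ∈ matrixBox k X := by
    intro b hb
    have := mem_matrixBox.mp (hA hb)
    refine mem_matrixBox.mpr fun i j => ?_
    have h1 := this i j
    simp only [clearEntry]
    split_ifs <;> omega
  rw [← Finset.sum_fiberwise_of_maps_to hmaps, ← sum_recipWeight, Finset.mul_sum]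
  refine Finset.sum_le_sum fun c hc => ?_
  set F := {b ∈ A | clearEntry i₀ j₀ b = c} with hF
  set P := ∏ i, c i j₀ with hP
  have hP0 : (0 : ℝ) < P := by
    exact_mod_cast Finset.prod_pos fun i _ => (mem_matrixBox.mp hc i j₀).1
  have hx' : (0 : ℝ) < x := by exact_mod_cast hx
  have hmem : ∀ b ∈ F, b i₀ j₀ * P ∈ Finset.Ioc x (x + H) := by
    intro b hb
    obtain ⟨hbA, rfl⟩ := Finset.mem_filter.mp hb
    exact col_prod_eq i₀ j₀ b ▸ hcol b hbA
  have hinj : Set.InjOn (fun b : Fin k → Fin k → ℕ => b i₀ j₀) (F : Set _) := by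
    intro g hg g' hg' h
    have e1 := (Finset.mem_filter.mp hg).2
    have e2 := (Finset.mem_filter.mp hg').2
    funext i j
    by_cases hij : i = i₀ ∧ j = j₀
    · obtain ⟨rfl, rfl⟩ := hij; exact h
    · have := congrFun (congrFun (e1.trans e2.symm) i) j
      simp only [clearEntry] at this
      split_ifs at this <;> simp_all
  have hcard : (F.card : ℝ) ≤ 3 * H * (P : ℝ)⁻¹ := by
    rw [← Finset.card_image_of_injOn hinj]
    refine card_le_of_mul_mem_Ioc hH _ fun u hu => ?_
    obtain ⟨b, hb, rfl⟩ := Finset.mem_image.mp hu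
    exact ⟨hmem b hb, hbig b (Finset.mem_filter.mp hb).1⟩
  calc ∑ b ∈ F, recipWeight b ≤ ∑ b ∈ F, (P / x : ℝ) * recipWeight c := by
        refine Finset.sum_le_sum fun b hb => ?_
        have hlt := (Finset.mem_Ioc.mp (hmem b hb)).1
        have hb0 : 0 < b i₀ j₀ := by
          rcases Nat.eq_zero_or_pos (b i₀ j₀) with h | h
          · simp [h] at hlt
          · exact h
        rw [recipWeight_clearEntry i₀ j₀, (Finset.mem_filter.mp hb).2]
        refine mul_le_mul_of_nonneg_right ?_ (recipWeight_nonneg c)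
        have hb0' : (0 : ℝ) < b i₀ j₀ := by exact_mod_cast hb0
        rw [inv_eq_one_div, div_le_div_iff₀ hb0' hx']
        have : (x : ℝ) < b i₀ j₀ * P := by exact_mod_cast hlt
        linarith
    _ = F.card * ((P / x : ℝ) * recipWeight c) := by simp
    _ ≤ (3 * H * (P : ℝ)⁻¹) * ((P / x : ℝ) * recipWeight c) := by
        refine mul_le_mul_of_nonneg_right hcard ?_
        have := recipWeight_nonneg c
        positivity
    _ = 3 * ((H : ℝ) / x) * recipWeight c := by
        field_simp

/-- Two distinct integers whose ratio lies between `x / (x + H)` and `(x + H) / x`. -/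
abbrev ClosePair (x H r c : ℕ) : Prop :=
  r ≠ c ∧ x * r ≤ (x + H) * c ∧ x * c ≤ (x + H) * r

lemma ClosePair.symm {x H r c : ℕ} (h : ClosePair x H r c) : ClosePair x H c r :=
  ⟨h.1.symm, h.2.2, h.2.1⟩

lemma closePair_of_mul_mem_Ioc {x H g r c : ℕ} (hr : g * r ∈ Finset.Ioc x (x + H))
    (hc : g * c ∈ Finset.Ioc x (x + H)) (hne : r ≠ c) : ClosePair x H r c := by
  rw [Finset.mem_Ioc] at hr hc
  have hg : 0 < g := by
    rcases Nat.eq_zero_or_pos g with rfl | h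
    · simp at hr
    · exact h
  refine ⟨hne, Nat.le_of_mul_le_mul_left (?_ : g * _ ≤ g * _) hg,
    Nat.le_of_mul_le_mul_left (?_ : g * _ ≤ g * _) hg⟩
  · calc g * (x * r) = x * (g * r) := by ring
      _ ≤ (g * c) * (x + H) := Nat.mul_le_mul hc.1.le hr.2
      _ = g * ((x + H) * c) := by ring
  · calc g * (x * c) = x * (g * c) := by ring
      _ ≤ (g * r) * (x + H) := Nat.mul_le_mul hr.1.le hc.2
      _ = g * ((x + H) * r) := by ring

lemma sum_inv_closePair_le {x H r : ℕ} (hx : 0 < x) (hH : H ≤ x) (hr : 0 < r) (Q : Finset ℕ) :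
    ∑ c ∈ Q with ClosePair x H r c, (c : ℝ)⁻¹ ≤ 4 * ((H : ℝ) / x) := by
  set F := {c ∈ Q | ClosePair x H r c} with hF
  obtain ⟨D, hD⟩ : ∃ D, D = H * r / x := ⟨_, rfl⟩
  have hsub : F ⊆ (Finset.Icc (r - D) (r + D)).erase r := by
    intro c hc
    obtain ⟨hne, h1, h2⟩ := (Finset.mem_filter.mp hc).2
    have e1 : c - r ≤ D := by
      rw [hD, Nat.le_div_iff_mul_le hx, Nat.sub_mul, Nat.sub_le_iff_le_add]
      linarith
    have e2 : r - c ≤ D := by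
      rcases le_total r c with h | h
      · simp [Nat.sub_eq_zero_of_le h]
      rw [hD, Nat.le_div_iff_mul_le hx, Nat.sub_mul, Nat.sub_le_iff_le_add]
      have := Nat.mul_le_mul_left H h
      linarith
    rw [Finset.mem_erase, Finset.mem_Icc]
    omega
  have hcard : (F.card : ℝ) ≤ 2 * (H * r / x) := by
    have h1 := Finset.card_le_card hsub
    rw [Finset.card_erase_of_mem (by rw [Finset.mem_Icc]; omega), Nat.card_Icc] at h1
    have h2 : F.card ≤ 2 * D := by omega
    have h3 : (D : ℝ) ≤ H * r / x := by rw [hD]; exact_mod_cast Nat.cast_div_le (α := ℝ)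
    have h4 : (F.card : ℝ) ≤ 2 * D := by exact_mod_cast h2
    linarith
  have hr' : (0 : ℝ) < r := by exact_mod_cast hr
  have hx' : (0 : ℝ) < x := by exact_mod_cast hx
  calc ∑ c ∈ F, (c : ℝ)⁻¹ ≤ ∑ c ∈ F, (2 / r : ℝ) := by
        refine Finset.sum_le_sum fun c hc => ?_
        obtain ⟨hne, h1, -⟩ := (Finset.mem_filter.mp hc).2
        have h2 : r ≤ 2 * c := by
          refine Nat.le_of_mul_le_mul_left (?_ : x * r ≤ x * (2 * c)) hx
          have := Nat.mul_le_mul_right c hH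
          linarith
        have hc0 : (0 : ℝ) < c := by exact_mod_cast (by omega : 0 < c)
        rw [inv_eq_one_div, div_le_div_iff₀ hc0 hr']
        have : (r : ℝ) ≤ 2 * c := by exact_mod_cast h2
        linarith
    _ = F.card * (2 / r : ℝ) := by simp
    _ ≤ 2 * (H * r / x) * (2 / r : ℝ) := by gcongr
    _ = 4 * ((H : ℝ) / x) := by field_simp; ring

/-- The number of tuples with entries in `[1, X]` and product `r`. -/
def tupleCount (k X r : ℕ) : ℕ := Finset.card {a ∈ tupleBox k X | ∏ i, a i = r}

lemma mem_matrixBox_of_row_prod {k X : ℕ} {g : Fin k → Fin k → ℕ}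
    (hg : ∀ i, 1 ≤ ∏ j, g i j ∧ ∏ j, g i j ≤ X) : g ∈ matrixBox k X := by
  refine mem_matrixBox.mpr fun i j => ?_
  have hd : g i j ∣ ∏ j, g i j := Finset.dvd_prod_of_mem _ (Finset.mem_univ j)
  exact ⟨Nat.pos_of_dvd_of_pos hd (hg i).1, (Nat.le_of_dvd (hg i).1 hd).trans (hg i).2⟩

lemma recipWeight_eq_inv {k : ℕ} (g : Fin k → Fin k → ℕ) :
    recipWeight g = ((∏ i, ∏ j, g i j : ℕ) : ℝ)⁻¹ := by
  simp [recipWeight, Finset.prod_inv_distrib]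

lemma sum_tupleCount_sq_mul_inv_le (k X : ℕ) (Q : Finset ℕ) :
    ∑ r ∈ Q, (tupleCount k X r : ℝ) ^ 2 * (r : ℝ)⁻¹ ≤ recipSum X ^ (k ^ 2) := by
  rw [← sum_recipWeight]
  have key : ∑ r ∈ Q, ∑ g ∈ matrixBox k X with ∏ i, ∏ j, g i j = r, recipWeight g ≤
      ∑ g ∈ matrixBox k X, recipWeight g :=
    Finset.sum_fiberwise_le_sum_of_sum_fiber_nonneg fun r _ =>
      Finset.sum_nonneg fun g _ => recipWeight_nonneg g
  refine le_trans (Finset.sum_le_sum fun r _ => ?_) key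
  set G := {g ∈ matrixBox k X | ∏ i, ∏ j, g i j = r} with hG
  have hsub : ({a ∈ tupleBox k X | ∏ i, a i = r} ×ˢ {a ∈ tupleBox k X | ∏ i, a i = r}) ⊆
      G.image fun g => ((fun i => ∏ j, g i j), fun j => ∏ i, g i j) := by
    rintro ⟨a, b⟩ hab
    simp only [Finset.mem_product, Finset.mem_filter, mem_tupleBox] at hab
    obtain ⟨⟨ha, har⟩, hb, hbr⟩ := hab
    obtain ⟨g, hg, hg'⟩ := exists_matrix_of_prod_eq a b (fun i => (ha i).1) (har.trans hbr.symm)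
    refine Finset.mem_image.mpr ⟨g, Finset.mem_filter.mpr ⟨?_, ?_⟩, ?_⟩
    · exact mem_matrixBox_of_row_prod fun i => hg i ▸ ha i
    · simp [hg, har]
    · exact Prod.ext (funext hg) (funext hg')
  have hcard := (Finset.card_le_card hsub).trans Finset.card_image_le
  rw [Finset.card_product] at hcard
  calc (tupleCount k X r : ℝ) ^ 2 * (r : ℝ)⁻¹ ≤ G.card * (r : ℝ)⁻¹ := by
        refine mul_le_mul_of_nonneg_right ?_ (by positivity)
        rw [sq]
        exact_mod_cast hcard
    _ = ∑ g ∈ G, recipWeight g := by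
        rw [← nsmul_eq_mul, ← Finset.sum_const]
        refine Finset.sum_congr rfl fun g hg => ?_
        rw [recipWeight_eq_inv, (Finset.mem_filter.mp hg).2]

lemma sum_closePair_le {k x H X : ℕ} (hx : 0 < x) (hH : H ≤ x) :
    ∑ a ∈ tupleBox k X, ∑ b ∈ tupleBox k X with ClosePair x H (∏ i, a i) (∏ i, b i),
      ((∏ i, a i : ℕ) : ℝ)⁻¹ * ((∏ i, b i : ℕ) : ℝ)⁻¹ ≤
        4 * ((H : ℝ) / x) * recipSum X ^ (k ^ 2) := by
  set Q := (tupleBox k X).image fun a => ∏ i, a i with hQ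
  set τ : ℕ → ℝ := fun r => (tupleCount k X r : ℝ) with hτ
  set K : ℕ → ℕ → ℝ := fun r c => if ClosePair x H r c then (r : ℝ)⁻¹ * (c : ℝ)⁻¹ else 0 with hK
  have hKnn : ∀ r c, 0 ≤ K r c := fun r c => by simp only [hK]; split_ifs <;> positivity
  have hKsymm : ∀ r c, K r c = K c r := fun r c => by
    have : ClosePair x H r c ↔ ClosePair x H c r := ⟨ClosePair.symm, ClosePair.symm⟩
    simp only [hK, this, mul_comm (r : ℝ)⁻¹]
  have hcomp : ∀ f : ℕ → ℝ, ∑ a ∈ tupleBox k X, f (∏ i, a i) = ∑ r ∈ Q, τ r * f r := fun f => by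
    rw [Finset.sum_comp f fun a : Fin k → ℕ => ∏ i, a i]
    simp [hτ, hQ, tupleCount]
  have hrow : ∀ r ∈ Q, ∑ c ∈ Q, K r c ≤ 4 * ((H : ℝ) / x) * (r : ℝ)⁻¹ := by
    intro r hr
    obtain ⟨a, ha, rfl⟩ := Finset.mem_image.mp hr
    have hr0 : 0 < ∏ i, a i := Finset.prod_pos fun i _ => (mem_tupleBox.mp ha i).1
    have := sum_inv_closePair_le hx hH hr0 Q
    simp only [hK]
    rw [← Finset.sum_filter, ← Finset.mul_sum, mul_comm]
    exact mul_le_mul_of_nonneg_right this (by positivity)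
  calc _ = ∑ a ∈ tupleBox k X, ∑ b ∈ tupleBox k X, K (∏ i, a i) (∏ i, b i) := by
        simp only [hK, Finset.sum_filter]
    _ = ∑ r ∈ Q, ∑ c ∈ Q, τ r * τ c * K r c := by
        simp only [fun a : Fin k → ℕ => hcomp fun c => K (∏ i, a i) c]
        rw [hcomp fun r => ∑ c ∈ Q, τ c * K r c]
        simp only [Finset.mul_sum, mul_assoc]
    _ ≤ ∑ r ∈ Q, ∑ c ∈ Q, (τ r ^ 2 * K r c / 2 + τ c ^ 2 * K r c / 2) := by
        refine Finset.sum_le_sum fun r _ => Finset.sum_le_sum fun c _ => ?_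
        have := mul_nonneg (sq_nonneg (τ r - τ c)) (hKnn r c)
        linarith
    _ = ∑ r ∈ Q, τ r ^ 2 * ∑ c ∈ Q, K r c := by
        simp only [Finset.sum_add_distrib]
        rw [Finset.sum_comm (f := fun r c => τ c ^ 2 * K r c / 2), ← Finset.sum_add_distrib]
        refine Finset.sum_congr rfl fun r _ => ?_
        rw [← Finset.sum_add_distrib, Finset.mul_sum]
        refine Finset.sum_congr rfl fun c _ => ?_
        rw [hKsymm c r]
        ring
    _ ≤ ∑ r ∈ Q, τ r ^ 2 * (4 * ((H : ℝ) / x) * (r : ℝ)⁻¹) :=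
        Finset.sum_le_sum fun r hr => mul_le_mul_of_nonneg_left (hrow r hr) (sq_nonneg _)
    _ = 4 * ((H : ℝ) / x) * ∑ r ∈ Q, τ r ^ 2 * (r : ℝ)⁻¹ := by
        rw [Finset.mul_sum]
        exact Finset.sum_congr rfl fun r _ => by ring
    _ ≤ _ := mul_le_mul_of_nonneg_left (sum_tupleCount_sq_mul_inv_le k X Q) (by positivity)

/-- The matrix with row `i₀` and column `j₀` replaced by ones. -/
def clearCross {k : ℕ} (i₀ j₀ : Fin k) (b : Fin k → Fin k → ℕ) : Fin k → Fin k → ℕ :=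
  fun i j => if i = i₀ then 1 else if j = j₀ then 1 else b i j

lemma recipWeight_clearCross {k : ℕ} {i₀ j₀ : Fin k} {b : Fin k → Fin k → ℕ}
    (h : b i₀ j₀ = 1) :
    recipWeight b = ((∏ j, b i₀ j : ℕ) : ℝ)⁻¹ * ((∏ i, b i j₀ : ℕ) : ℝ)⁻¹ *
      recipWeight (clearCross i₀ j₀ b) := by
  have hrest : ∏ i, (if i = i₀ then 1 else ∏ j, b i j) =
      (∏ i, b i j₀) * ∏ i, ∏ j, clearCross i₀ j₀ b i j := by
    rw [prod_eq_mul_prod_ite (fun i => b i j₀) i₀, h, one_mul, ← Finset.prod_mul_distrib]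
    refine Finset.prod_congr rfl fun i _ => ?_
    simp only [clearCross]
    split_ifs
    · simp
    · exact prod_eq_mul_prod_ite (fun j => b i j) j₀
  simp only [recipWeight_eq_inv, ← mul_inv, ← Nat.cast_mul]
  rw [prod_eq_mul_prod_ite (fun i => ∏ j, b i j) i₀, hrest, mul_assoc]

lemma sum_recipWeight_le_of_closePair {k x H X : ℕ} (hx : 0 < x) (hH : H ≤ x) (hX : 1 ≤ X)
    (i₀ j₀ : Fin k) (A : Finset (Fin k → Fin k → ℕ)) (hA : A ⊆ matrixBox k X)
    (hone : ∀ b ∈ A, b i₀ j₀ = 1)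
    (hclose : ∀ b ∈ A, ClosePair x H (∏ j, b i₀ j) (∏ i, b i j₀)) :
    ∑ b ∈ A, recipWeight b ≤ 4 * ((H : ℝ) / x) * recipSum X ^ (2 * k ^ 2) := by
  set φ : (Fin k → Fin k → ℕ) → ((Fin k → ℕ) × (Fin k → ℕ)) × (Fin k → Fin k → ℕ) :=
    fun b => ((fun j => b i₀ j, fun i => b i j₀), clearCross i₀ j₀ b) with hφ
  set v : ((Fin k → ℕ) × (Fin k → ℕ)) → ℝ :=
    fun p => ((∏ i, p.1 i : ℕ) : ℝ)⁻¹ * ((∏ i, p.2 i : ℕ) : ℝ)⁻¹ with hv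
  set T := {p ∈ tupleBox k X ×ˢ tupleBox k X | ClosePair x H (∏ i, p.1 i) (∏ i, p.2 i)} with hT
  have hinj : Set.InjOn φ (A : Set _) := by
    intro b _ b' _ h
    simp only [hφ, Prod.mk.injEq] at h
    obtain ⟨⟨h1, h2⟩, h3⟩ := h
    funext i j
    by_cases hi : i = i₀
    · subst hi; exact congrFun h1 j
    by_cases hj : j = j₀
    · subst hj; exact congrFun h2 i
    · simpa [clearCross, hi, hj] using congrFun (congrFun h3 i) j
  have hmaps : A.image φ ⊆ T ×ˢ matrixBox k X := by
    intro p hp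
    obtain ⟨b, hb, rfl⟩ := Finset.mem_image.mp hp
    have hbox := mem_matrixBox.mp (hA hb)
    refine Finset.mem_product.mpr ⟨Finset.mem_filter.mpr ⟨Finset.mem_product.mpr ⟨?_, ?_⟩,
      hclose b hb⟩, ?_⟩
    · exact mem_tupleBox.mpr fun j => hbox i₀ j
    · exact mem_tupleBox.mpr fun i => hbox i j₀
    · refine mem_matrixBox.mpr fun i j => ?_
      have := hbox i j
      simp only [hφ, clearCross]
      split_ifs <;> omega
  have hvT : ∑ p ∈ T, v p ≤ 4 * ((H : ℝ) / x) * recipSum X ^ (k ^ 2) := by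
    refine le_trans (le_of_eq ?_) (sum_closePair_le (k := k) (X := X) hx hH)
    rw [hT, Finset.sum_filter, Finset.sum_product]
    simp only [Finset.sum_filter, hv]
  have hL : 0 ≤ recipSum X := zero_le_one.trans (one_le_recipSum hX)
  have hweight : ∀ b ∈ A, recipWeight b = v (φ b).1 * recipWeight (φ b).2 :=
    fun b hb => recipWeight_clearCross (hone b hb)
  have hnn : ∀ q, 0 ≤ v q := fun q => by simp only [hv]; positivity
  clear_value φ v T
  rw [Finset.sum_congr rfl hweight,
    ← Finset.sum_image (f := fun q => v q.1 * recipWeight q.2) hinj]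
  calc ∑ q ∈ A.image φ, v q.1 * recipWeight q.2
      ≤ ∑ q ∈ T ×ˢ matrixBox k X, v q.1 * recipWeight q.2 :=
        Finset.sum_le_sum_of_subset_of_nonneg hmaps fun q _ _ =>
          mul_nonneg (hnn _) (recipWeight_nonneg _)
    _ = (∑ p ∈ T, v p) * recipSum X ^ (k ^ 2) := by
        rw [Finset.sum_product, ← sum_recipWeight, Finset.sum_mul_sum]
    _ ≤ (4 * ((H : ℝ) / x) * recipSum X ^ (k ^ 2)) * recipSum X ^ (k ^ 2) := by gcongr
    _ = 4 * ((H : ℝ) / x) * recipSum X ^ (2 * k ^ 2) := by rw [two_mul, pow_add, mul_assoc]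

lemma exists_entry_mul_ge {k x H : ℕ} (hk : 1 ≤ k) (hx : 0 < x)
    (hH : (x : ℝ) ^ ((1 : ℝ) - 1 / (50 * (k : ℝ))) ≤ (H : ℝ)) (a : Fin k → ℕ)
    (ha : x < ∏ j, a j) : ∃ j, x ≤ a j * H := by
  by_contra! hlt
  have hx' : (1 : ℝ) ≤ x := by exact_mod_cast hx
  have hk' : (1 : ℝ) ≤ k := by exact_mod_cast hk
  have hxH : (x : ℝ) ≤ x ^ (1 / (k : ℝ)) * H := by
    calc (x : ℝ) = x ^ (1 / (50 * (k : ℝ))) * x ^ ((1 : ℝ) - 1 / (50 * (k : ℝ))) := by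
          rw [← Real.rpow_add (by linarith)]; simp
      _ ≤ x ^ (1 / (k : ℝ)) * H := by
          gcongr
          linarith
  have hle : ∀ j, (a j : ℝ) ≤ x ^ (1 / (k : ℝ)) := by
    intro j
    have h1 : (a j : ℝ) * H < x := by exact_mod_cast hlt j
    exact (lt_of_mul_lt_mul_right (h1.trans_le hxH) (Nat.cast_nonneg H)).le
  have hprod : ((∏ j, a j : ℕ) : ℝ) ≤ x := by
    push_cast
    calc ∏ j, (a j : ℝ) ≤ ∏ _j : Fin k, (x : ℝ) ^ (1 / (k : ℝ)) :=
          Finset.prod_le_prod (fun _ _ => by positivity) fun j _ => hle j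
      _ = x := by
          rw [Finset.prod_const, Finset.card_univ, Fintype.card_fin, ← Real.rpow_mul_natCast
            (by positivity), one_div_mul_cancel (by positivity), Real.rpow_one]
  exact absurd ha (not_lt.mpr (by exact_mod_cast hprod))

/-- The matrices whose row and column products lie in `(x, x + H]` and do not agree as
multisets. -/
noncomputable def nontrivialMatrices (k x H : ℕ) : Finset (Fin k → Fin k → ℕ) :=
  {g ∈ matrixBox k (x + H) | (∀ i, ∏ j, g i j ∈ Finset.Ioc x (x + H)) ∧
    (∀ j, ∏ i, g i j ∈ Finset.Ioc x (x + H)) ∧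
    Multiset.map (fun i => ∏ j, g i j) Finset.univ.val ≠
      Multiset.map (fun j => ∏ i, g i j) Finset.univ.val}

lemma NkCount_le_card (k x H : ℕ) : NkCount k x H ≤ (nontrivialMatrices k x H).card := by
  have hsub : {p : (Fin k → ℕ) × (Fin k → ℕ) |
      (∀ i, p.1 i ∈ Finset.Ioc x (x + H)) ∧ (∀ i, p.2 i ∈ Finset.Ioc x (x + H)) ∧
      (∏ i, p.1 i) = (∏ i, p.2 i) ∧
      Multiset.map p.1 Finset.univ.val ≠ Multiset.map p.2 Finset.univ.val} ⊆
      ((nontrivialMatrices k x H).image fun g => ((fun i => ∏ j, g i j), fun j => ∏ i, g i j) :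
        Finset ((Fin k → ℕ) × (Fin k → ℕ))) := by
    rintro ⟨a, b⟩ ⟨ha, hb, hab, hne⟩
    simp only [Finset.mem_Ioc] at ha hb hab hne
    obtain ⟨g, hg, hg'⟩ := exists_matrix_of_prod_eq a b (fun i => by have := ha i; omega) hab
    refine Finset.mem_coe.mpr (Finset.mem_image.mpr ⟨g, ?_, Prod.ext (funext hg) (funext hg')⟩)
    refine Finset.mem_filter.mpr
      ⟨mem_matrixBox_of_row_prod fun i => ?_, fun i => ?_, fun j => ?_, ?_⟩
    · have := ha i
      rw [hg i]
      omega
    · rw [hg i]; exact Finset.mem_Ioc.mpr (ha i)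
    · rw [hg' j]; exact Finset.mem_Ioc.mpr (hb j)
    · simpa only [hg, hg'] using hne
  have h := Set.ncard_le_ncard hsub (Finset.finite_toSet _)
  rw [Set.ncard_coe_finset] at h
  exact h.trans Finset.card_image_le

lemma recipSum_pow_le_pow {X m n : ℕ} (hX : 1 ≤ X) (h : m ≤ n) :
    recipSum X ^ m ≤ recipSum X ^ n :=
  pow_le_pow_right₀ (one_le_recipSum hX) h

lemma sum_image_clearEntries_le {k x H : ℕ} (hx : 0 < x) (hH : H ≤ x)
    (hbig : ∀ g ∈ nontrivialMatrices k x H, ∀ j, ∃ i, x ≤ g i j * H) (σ : Fin k → Fin k) :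
    ∑ b ∈ {g ∈ nontrivialMatrices k x H | ∀ i, x ≤ g i (σ i) * H}.image (clearEntries σ),
      recipWeight b ≤ k * (4 * ((H : ℝ) / x) * recipSum (x + H) ^ (2 * k ^ 2)) := by
  set M := {g ∈ nontrivialMatrices k x H | ∀ i, x ≤ g i (σ i) * H} with hM
  have hX : 1 ≤ x + H := by omega
  have hmem : ∀ g ∈ M, g ∈ nontrivialMatrices k x H := fun g hg => (Finset.mem_filter.mp hg).1
  have hbox : M.image (clearEntries σ) ⊆ matrixBox k (x + H) := by
    intro b hb
    obtain ⟨g, hg, rfl⟩ := Finset.mem_image.mp hb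
    have hg' := mem_matrixBox.mp (Finset.mem_filter.mp (hmem g hg)).1
    refine mem_matrixBox.mpr fun i j => ?_
    have := hg' i j
    simp only [clearEntries]
    split_ifs <;> omega
  have hcover : ∀ p : Fin k → (Fin k → Fin k → ℕ) → Prop,
      (∀ g ∈ M, ∃ i, p i (clearEntries σ g)) →
      (∀ i, ∀ A ⊆ matrixBox k (x + H), (∀ b ∈ A, b ∈ M.image (clearEntries σ) ∧ p i b) →
        ∑ b ∈ A, recipWeight b ≤ 4 * ((H : ℝ) / x) * recipSum (x + H) ^ (2 * k ^ 2)) →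
      ∑ b ∈ M.image (clearEntries σ), recipWeight b ≤
        k * (4 * ((H : ℝ) / x) * recipSum (x + H) ^ (2 * k ^ 2)) := by
    classical
    intro p hp hA
    calc ∑ b ∈ M.image (clearEntries σ), recipWeight b
        ≤ ∑ b ∈ M.image (clearEntries σ), ∑ i, if p i b then recipWeight b else 0 := by
          refine Finset.sum_le_sum fun b hb => ?_
          obtain ⟨g, hg, rfl⟩ := Finset.mem_image.mp hb
          obtain ⟨i, hi⟩ := hp g hg
          have := Finset.single_le_sum (s := Finset.univ)
            (f := fun i => if p i (clearEntries σ g) then recipWeight (clearEntries σ g) else 0)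
            (fun i _ => by split_ifs <;> simp [recipWeight_nonneg]) (Finset.mem_univ i)
          simpa [hi] using this
      _ = ∑ i, ∑ b ∈ M.image (clearEntries σ) with p i b, recipWeight b := by
          rw [Finset.sum_comm]
          simp only [Finset.sum_filter]
      _ ≤ ∑ _i : Fin k, 4 * ((H : ℝ) / x) * recipSum (x + H) ^ (2 * k ^ 2) :=
          Finset.sum_le_sum fun i _ => hA i _ ((Finset.filter_subset _ _).trans hbox)
            fun b hb => Finset.mem_filter.mp hb
      _ = _ := by simp
  by_cases hσ : Function.Surjective σ
  · have hσi : Function.Injective σ := Finite.injective_iff_surjective.mpr hσ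
    have hcol : ∀ (g : Fin k → Fin k → ℕ) i,
        ∏ l, g l (σ i) = g i (σ i) * ∏ l, clearEntries σ g l (σ i) := by
      intro g i
      rw [prod_eq_mul_prod_ite (fun l => g l (σ i)) i]
      simp only [clearEntries, hσi.eq_iff, eq_comm]
    refine hcover (fun i b => ClosePair x H (∏ j, b i j) (∏ l, b l (σ i))) (fun g hg => ?_)
      fun i A hA hb => ?_
    · obtain ⟨-, hr, hc, hne⟩ := Finset.mem_filter.mp (hmem g hg)
      by_contra! hcon
      refine hne ?_
      have heq : ∀ i, ∏ j, g i j = ∏ l, g l (σ i) := by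
        intro i
        have h1 := row_prod_eq σ g i
        have h2 := hcol g i
        by_cases he : ∏ j, clearEntries σ g i j = ∏ l, clearEntries σ g l (σ i)
        · rw [h1, h2, he]
        · exact absurd (closePair_of_mul_mem_Ioc (h1 ▸ hr i) (h2 ▸ hc (σ i)) he) (hcon i)
      simp only [heq]
      have := Multiset.map_univ_val_equiv (Equiv.ofBijective σ ⟨hσi, hσ⟩)
      conv_rhs => rw [← this]
      rw [Multiset.map_map]
      rfl
    · refine sum_recipWeight_le_of_closePair hx hH hX i (σ i) A hA (fun b hbA => ?_)
        fun b hbA => (hb b hbA).2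
      obtain ⟨g, -, rfl⟩ := Finset.mem_image.mp (hb b hbA).1
      simp [clearEntries]
  · obtain ⟨j₀, hj₀⟩ := not_forall.mp hσ
    have hne : ∀ i, j₀ ≠ σ i := fun i h => hj₀ ⟨i, h.symm⟩
    refine hcover (fun i b => x ≤ b i j₀ * H) (fun g hg => ?_) fun i A hA hb => ?_
    · obtain ⟨i, hi⟩ := hbig g (hmem g hg) j₀
      exact ⟨i, by simpa [clearEntries, hne i] using hi⟩
    · have h1 := sum_recipWeight_le_of_col hx hH i j₀ A hA (fun b hbA => ?_)
        fun b hbA => (hb b hbA).2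
      · refine h1.trans ?_
        have h2 := recipSum_pow_le_pow hX (by omega : k ^ 2 ≤ 2 * k ^ 2)
        have h3 : 0 ≤ recipSum (x + H) ^ (k ^ 2) :=
          pow_nonneg (zero_le_one.trans (one_le_recipSum hX)) _
        gcongr
        norm_num
      · obtain ⟨g, hg, rfl⟩ := Finset.mem_image.mp (hb b hbA).1
        simpa [clearEntries, hne] using (Finset.mem_filter.mp (hmem g hg)).2.2.1 j₀

lemma card_nontrivialMatrices_le {k x H : ℕ} (hx : 0 < x) (hH : H ≤ x)
    (hrow : ∀ g ∈ nontrivialMatrices k x H, ∀ i, ∃ j, x ≤ g i j * H)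
    (hcol : ∀ g ∈ nontrivialMatrices k x H, ∀ j, ∃ i, x ≤ g i j * H) :
    ((nontrivialMatrices k x H).card : ℝ) ≤ (k : ℝ) ^ k *
      ((3 * H) ^ k * (k * (4 * ((H : ℝ) / x) * recipSum (x + H) ^ (2 * k ^ 2)))) := by
  have hsub : nontrivialMatrices k x H ⊆ (Finset.univ : Finset (Fin k → Fin k)).biUnion fun σ =>
      {g ∈ nontrivialMatrices k x H | ∀ i, x ≤ g i (σ i) * H} := by
    intro g hg
    choose σ hσ using hrow g hg
    exact Finset.mem_biUnion.mpr ⟨σ, Finset.mem_univ σ, Finset.mem_filter.mpr ⟨hg, hσ⟩⟩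
  have hcard := (Finset.card_le_card hsub).trans Finset.card_biUnion_le
  calc ((nontrivialMatrices k x H).card : ℝ)
      ≤ ∑ σ : Fin k → Fin k,
        (Finset.card {g ∈ nontrivialMatrices k x H | ∀ i, x ≤ g i (σ i) * H} : ℝ) := by
        exact_mod_cast hcard
    _ ≤ ∑ _σ : Fin k → Fin k,
        ((3 * H) ^ k * (k * (4 * ((H : ℝ) / x) * recipSum (x + H) ^ (2 * k ^ 2)))) := by
        refine Finset.sum_le_sum fun σ _ => ?_
        refine (card_le_sum_image_clearEntries hH σ _ (fun g hg => ?_)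
          fun g hg => (Finset.mem_filter.mp hg).2).trans
          (mul_le_mul_of_nonneg_left (sum_image_clearEntries_le hx hH hcol σ) (by positivity))
        exact (Finset.mem_filter.mp (Finset.mem_filter.mp hg).1).2.1
    _ = _ := by simp

/-- for every `k ≥ 1` there are `C_k > 0` and a threshold `x₀(k)` such
that for all integers `x ≥ x₀(k)` and `H` with `x^{1 − 1/(50k)} ≤ H ≤ x`, one has
`N_k(x, H) ≤ C_k · H^k · (H/x) · (1 + log x)^{2k²+2}`. -/
theorem stmt12 (k : ℕ) (hk : 1 ≤ k) :
    ∃ C : ℝ, 0 < C ∧ ∃ x₀ : ℕ, ∀ x H : ℕ, x₀ ≤ x →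
      (x : ℝ) ^ ((1 : ℝ) - 1 / (50 * (k : ℝ))) ≤ (H : ℝ) → H ≤ x →
      (NkCount k x H : ℝ) ≤
        C * (H : ℝ) ^ k * ((H : ℝ) / (x : ℝ)) * (1 + Real.log x) ^ (2 * k ^ 2 + 2) := by
  have hk0 : (0 : ℝ) < k := by exact_mod_cast hk
  refine ⟨(k : ℝ) ^ k * 3 ^ k * k * 4 * 2 ^ (2 * k ^ 2), by positivity, 1, fun x H hx hxH hH => ?_⟩
  have hx' : (1 : ℝ) ≤ x := by exact_mod_cast hx
  have hlog : 0 ≤ Real.log x := Real.log_nonneg hx'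
  have hcard := card_nontrivialMatrices_le (k := k) hx hH
    (fun g hg i => exists_entry_mul_ge hk hx hxH _
      (Finset.mem_Ioc.mp ((Finset.mem_filter.mp hg).2.1 i)).1)
    (fun g hg j => exists_entry_mul_ge hk hx hxH (fun i => g i j)
      (Finset.mem_Ioc.mp ((Finset.mem_filter.mp hg).2.2.1 j)).1)
  have hL : recipSum (x + H) ≤ 2 * (1 + Real.log x) := by
    refine (recipSum_le _).trans ?_
    have h1 : Real.log ((x + H : ℕ) : ℝ) ≤ Real.log (2 * x) := by
      refine Real.log_le_log (by exact_mod_cast (by omega : 0 < x + H)) ?_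
      exact_mod_cast (by omega : x + H ≤ 2 * x)
    rw [Real.log_mul (by norm_num) (by linarith)] at h1
    linarith [Real.log_two_lt_d9]
  have hL0 : 0 ≤ recipSum (x + H) := zero_le_one.trans (one_le_recipSum (by omega))
  have hpow : recipSum (x + H) ^ (2 * k ^ 2) ≤
      2 ^ (2 * k ^ 2) * (1 + Real.log x) ^ (2 * k ^ 2 + 2) := by
    refine (pow_le_pow_left₀ hL0 hL _).trans ?_
    rw [mul_pow]
    gcongr
    · linarith
    · omega
  calc (NkCount k x H : ℝ) ≤ (nontrivialMatrices k x H).card := by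
        exact_mod_cast NkCount_le_card k x H
    _ ≤ _ := hcard
    _ ≤ (k : ℝ) ^ k * ((3 * H) ^ k * (k * (4 * ((H : ℝ) / x) *
          (2 ^ (2 * k ^ 2) * (1 + Real.log x) ^ (2 * k ^ 2 + 2))))) := by gcongr
    _ = _ := by rw [mul_pow]; ring
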